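/- Dual vertex-face correspondence: for all u, v ∈ ℂ (with every bracket and theta value appearing in a denominator nonzero, in particular [u], [v], [b] ≠ 0 for the heights involved), all ε₁, ε₂ ∈ {+1,−1}, and all a, b, c ∈ ℤ with |a−b| = |b−c| = 1, one has Σ_{ε₁', ε₂' ∈ {±1}} R̄(u−v)_{(ε₁',ε₂'),(ε₁,ε₂)} · ψ*_{ε₁'}(u)^a_b · ψ*_{ε₂'}(v)^b_c = Σ_{b' ∈ {a−1, a+1}, |b'−c| = 1} ψ*_{ε₂}(v)^a_{b'} · ψ*_{ε₁}(u)^{b'}_c · W̄(c, b'; b, a | u−v). -/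

import Mathlib

noncomputable section

open Complex Finset

namespace Ell

/-- `x^s = exp(-iπ s /(r τ))`. -/
def xp (τ : ℂ) (r : ℝ) (s : ℂ) : ℂ :=
  Complex.exp (-Complex.I * (Real.pi : ℂ) * s / ((r : ℂ) * τ))

/-- `Θ_p(z) = ∏_{j ≥ 0} (1 - z p^j)(1 - p^{j+1}/z)(1 - p^{j+1})`. -/
def Theta (p z : ℂ) : ℂ :=
  ∏' j : ℕ, ((1 - z * p ^ j) * (1 - p ^ (j + 1) / z) * (1 - p ^ (j + 1)))

/-- The bracket `[u] = x^{u²/r - u} Θ_p(x^{2u})` with `p = x^{2r}`. -/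
def br (τ : ℂ) (r : ℝ) (u : ℂ) : ℂ :=
  xp τ r (u ^ 2 / (r : ℂ) - u) * Theta (xp τ r (2 * (r : ℂ))) (xp τ r (2 * u))

/-- Elliptic shifted factorial `[u]_n = ∏_{j=0}^{n-1} [u+j]`. -/
def brF (τ : ℂ) (r : ℝ) (u : ℂ) (n : ℕ) : ℂ :=
  ∏ j ∈ Finset.range n, br τ r (u + (j : ℂ))

/-- Elliptic binomial coefficient `C_n^k(α,β,γ)`. -/
def Cnk (τ : ℂ) (r : ℝ) (k n : ℕ) (α β γ : ℂ) : ℂ :=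
  brF τ r 1 k / (brF τ r 1 n * brF τ r 1 (k - n)) *
    (brF τ r (α - γ) n * brF τ r (α + γ + (k : ℂ) - (n : ℂ)) n *
      brF τ r (α - β) (k - n) * brF τ r (α + β + (n : ℂ)) (k - n)) /
    (brF τ r (β - γ + (n : ℂ) - (k : ℂ)) n * brF τ r (γ - β - (n : ℂ)) (k - n) *
      brF τ r (β + γ) k)

/-- The elliptic 6j-symbol `R_n^m(α,β,γ,δ;k)`. -/
def Rnm (τ : ℂ) (r : ℝ) (k n m : ℕ) (α β γ δ : ℂ) : ℂ :=
  ∑ j ∈ Finset.range (min n m + 1),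
    Cnk τ r n j α γ (β + (k : ℂ) - (n : ℂ)) * Cnk τ r (k - j) (m - j) β (γ + (j : ℂ)) δ

/-- Terminating very-well-poised elliptic hypergeometric sum with explicit
truncation `N`:  `Σ_{j=0}^N ([u₀+2j]/[u₀]) ([u₀]_j/[1]_j) ∏ᵢ [uᵢ]_j/[u₀+1-uᵢ]_j`. -/
def Vsum (τ : ℂ) (r : ℝ) (u₀ : ℂ) (us : List ℂ) (N : ℕ) : ℂ :=
  ∑ j ∈ Finset.range (N + 1),
    br τ r (u₀ + 2 * (j : ℂ)) / br τ r u₀ * (brF τ r u₀ j / brF τ r 1 j) *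
      (us.map fun ui => brF τ r ui j / brF τ r (u₀ + 1 - ui) j).prod

/-- "Every bracket appearing in a denominator of `C_n^k(·,β,γ)` is nonzero". -/
def CdenomNZ (τ : ℂ) (r : ℝ) (k n : ℕ) (β γ : ℂ) : Prop :=
  brF τ r 1 n ≠ 0 ∧ brF τ r 1 (k - n) ≠ 0 ∧
    brF τ r (β - γ + (n : ℂ) - (k : ℂ)) n ≠ 0 ∧
    brF τ r (γ - β - (n : ℂ)) (k - n) ≠ 0 ∧ brF τ r (β + γ) k ≠ 0

/-- "Every bracket appearing in a denominator of `R_n^m(α,β,γ,δ;k)` is nonzero". -/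
def RdenomNZ (τ : ℂ) (r : ℝ) (k n m : ℕ) (β γ δ : ℂ) : Prop :=
  ∀ j ≤ min n m,
    CdenomNZ τ r n j γ (β + (k : ℂ) - (n : ℂ)) ∧
      CdenomNZ τ r (k - j) (m - j) (γ + (j : ℂ)) δ

/-- Jacobi theta `ϑ₁(v|σ)`. -/
def th1 (v σ : ℂ) : ℂ :=
  2 * Complex.exp (2 * (Real.pi : ℂ) * Complex.I * σ / 8) *
    (∏' n : ℕ, (1 - Complex.exp (2 * (Real.pi : ℂ) * Complex.I * σ) ^ (n + 1))) *
    Complex.sin ((Real.pi : ℂ) * v) *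
    ∏' n : ℕ,
      (1 - 2 * Complex.exp (2 * (Real.pi : ℂ) * Complex.I * σ) ^ (n + 1) *
            Complex.cos (2 * (Real.pi : ℂ) * v) +
        Complex.exp (2 * (Real.pi : ℂ) * Complex.I * σ) ^ (2 * (n + 1)))

/-- Jacobi theta `ϑ₀(v|σ)`. -/
def th0 (v σ : ℂ) : ℂ :=
  -Complex.I * Complex.exp ((Real.pi : ℂ) * Complex.I * (v + σ / 4)) * th1 (v + σ / 2) σ

/-- Jacobi theta `ϑ₂(v|σ)`. -/
def th2 (v σ : ℂ) : ℂ := th1 (v + 1 / 2) σ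

/-- Jacobi theta `ϑ₃(v|σ)`. -/
def th3 (v σ : ℂ) : ℂ :=
  Complex.exp ((Real.pi : ℂ) * Complex.I * (v + σ / 4)) * th1 (v + (σ + 1) / 2) σ

/-- Intertwining vector component `ψ_ε(u)^a_b`, `ε ∈ {1, -1}`. -/
def psi (τ : ℂ) (r : ℝ) (u : ℂ) (ε : ℤ) (a b : ℤ) : ℂ :=
  if ε = 1 then th0 ((((a : ℂ) - (b : ℂ)) * u + (a : ℂ)) / (2 * (r : ℂ))) (τ / 2)
  else th3 ((((a : ℂ) - (b : ℂ)) * u + (a : ℂ)) / (2 * (r : ℂ))) (τ / 2)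

/-- The constant `C = x^{-r/4} e^{-iπ/4} τ^{1/2}`. -/
def Cc (τ : ℂ) (r : ℝ) : ℂ :=
  xp τ r (-(r : ℂ) / 4) * Complex.exp (-(Real.pi : ℂ) * Complex.I / 4) * τ ^ (1 / 2 : ℂ)

/-- Dual intertwining vector component `ψ*_ε(u)^a_b = -ε(a-b) C² ψ_{-ε}(u-1)^a_b/(2[b][u])`. -/
def psiStar (τ : ℂ) (r : ℝ) (u : ℂ) (ε : ℤ) (a b : ℤ) : ℂ :=
  -(ε : ℂ) * ((a : ℂ) - (b : ℂ)) * Cc τ r ^ 2 * psi τ r (u - 1) (-ε) a b /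
    (2 * br τ r (b : ℂ) * br τ r u)

/-- Sign attached to a boolean. -/
def sg (b : Bool) : ℤ := if b then 1 else -1

/-- Canonical path from `a`: up for `j ≤ n`, down afterwards. -/
def cpathZ (a n : ℤ) (j : ℕ) : ℤ := if (j : ℤ) ≤ n then a + j else a + 2 * n - j

/-- Admissibility: `a - b ∈ {-k, -k+2, …, k}`. -/
def adm (k : ℕ) (a b : ℤ) : Prop := (a - b).natAbs ≤ k ∧ (a - b - (k : ℤ)) % 2 = 0

instance (k : ℕ) (a b : ℤ) : Decidable (adm k a b) := by unfold adm; infer_instance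

/-- Fused intertwining vector component `ψ^{(k)}_μ(u)^a_b` (zero if `a,b` not admissible). -/
def psiF (τ : ℂ) (r : ℝ) (k : ℕ) (μ : ℤ) (u : ℂ) (a b : ℤ) : ℂ :=
  if adm k a b then
    ∑ ε ∈ Finset.univ.filter fun ε : Fin k → Bool => (∑ j, sg (ε j)) = μ,
      ∏ j : Fin k,
        psi τ r (u + (k : ℂ) - (((j : ℕ) + 1 : ℕ) : ℂ)) (sg (ε j))
          (cpathZ a (((k : ℤ) - (a - b)) / 2) (j : ℕ))
          (cpathZ a (((k : ℤ) - (a - b)) / 2) ((j : ℕ) + 1))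
  else 0

/-- Partial-sum path attached to a sign sequence `δ`, starting at `a`. -/
def spath (k : ℕ) (a : ℤ) (δ : Fin k → Bool) (j : ℕ) : ℤ :=
  a + ∑ i ∈ Finset.range j, if h : i < k then sg (δ ⟨i, h⟩) else 0

/-- Fused dual intertwining vector component `ψ*^{(k)}_μ(u)^b_a`
(sum over all admissible paths from `a` to `b`; zero if not admissible). -/
def psiStarF (τ : ℂ) (r : ℝ) (k : ℕ) (μ : ℤ) (u : ℂ) (b a : ℤ) : ℂ :=
  if adm k a b then
    ∑ δ ∈ Finset.univ.filter fun δ : Fin k → Bool => (∑ j, sg (δ j)) = b - a,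
      ∏ j : Fin k,
        psiStar τ r (u + (k : ℂ) - (((j : ℕ) + 1 : ℕ) : ℂ))
          (if ((j : ℕ) + 1 : ℤ) ≤ ((k : ℤ) + μ) / 2 then 1 else -1)
          (spath k a δ ((j : ℕ) + 1)) (spath k a δ (j : ℕ))
  else 0

/-- The `L`-matrix `L^{(k)}(a,b;c,d|u) = Σ_μ ψ*^{(k)}_μ(u)^d_c ψ^{(k)}_μ(u)^a_b`. -/
def Lk (τ : ℂ) (r : ℝ) (k : ℕ) (u : ℂ) (a b c d : ℤ) : ℂ :=
  ∑ i ∈ Finset.range (k + 1),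
    psiStarF τ r k ((k : ℤ) - 2 * (i : ℤ)) u d c * psiF τ r k ((k : ℤ) - 2 * (i : ℤ)) u a b

/-- Normalized face weight `W̄(a,b;d,c|u)` (arguments ordered (NW, NE; SW, SE)). -/
def Wb (τ : ℂ) (r : ℝ) (u : ℂ) (a b d c : ℤ) : ℂ :=
  if b = a + 1 ∧ d = a + 1 ∧ c = a + 2 then 1
  else if b = a - 1 ∧ d = a - 1 ∧ c = a - 2 then 1
  else if b = a + 1 ∧ d = a + 1 ∧ c = a then
    br τ r ((a : ℂ) - u) * br τ r 1 / (br τ r (a : ℂ) * br τ r (1 + u))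
  else if b = a - 1 ∧ d = a - 1 ∧ c = a then
    br τ r ((a : ℂ) + u) * br τ r 1 / (br τ r (a : ℂ) * br τ r (1 + u))
  else if b = a + 1 ∧ d = a - 1 ∧ c = a then
    br τ r ((a : ℂ) + 1) * br τ r u / (br τ r (a : ℂ) * br τ r (1 + u))
  else if b = a - 1 ∧ d = a + 1 ∧ c = a then
    br τ r ((a : ℂ) - 1) * br τ r u / (br τ r (a : ℂ) * br τ r (1 + u))
  else 0

/-- Sequence with prescribed endpoints `d`, `c` and free interior values `f`. -/
def seqI (k : ℕ) (d c : ℤ) (f : Fin (k - 1) → ℤ) (j : ℕ) : ℤ :=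
  if h0 : j = 0 then d
  else if hj : j < k then f ⟨j - 1, by omega⟩ else c

/-- Fused face weight `W^{(k,1)}(a,b;d,c|u)`. -/
def Wk1 (τ : ℂ) (r : ℝ) (k : ℕ) (u : ℂ) (a b d c : ℤ) : ℂ :=
  if adm k a b then
    ∑' f : Fin (k - 1) → ℤ,
      ∏ j ∈ Finset.range k,
        Wb τ r (u + (k : ℂ) - ((j : ℂ) + 1))
          (cpathZ a (((k : ℤ) - (a - b)) / 2) j)
          (cpathZ a (((k : ℤ) - (a - b)) / 2) (j + 1))
          (seqI k d c f j) (seqI k d c f (j + 1))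
  else 0

/-- Fused face weight `W^{(k,l)}(a,b;d,c|u)`. -/
def Wkl (τ : ℂ) (r : ℝ) (k l : ℕ) (u : ℂ) (a b d c : ℤ) : ℂ :=
  if adm l b c then
    ∑' g : Fin (l - 1) → ℤ,
      ∏ i ∈ Finset.range l,
        Wk1 τ r k (u - (l : ℂ) + ((i : ℂ) + 1))
          (seqI l a d g i) (cpathZ b (((l : ℤ) - (b - c)) / 2) i)
          (seqI l a d g (i + 1)) (cpathZ b (((l : ℤ) - (b - c)) / 2) (i + 1))
  else 0

/-- Eight-vertex weight `ā(u)`. -/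
def aw (τ : ℂ) (r : ℝ) (u : ℂ) : ℂ :=
  th2 (1 / (2 * (r : ℂ))) (τ / 2) * th2 (u / (2 * (r : ℂ))) (τ / 2) /
    (th2 0 (τ / 2) * th2 ((1 + u) / (2 * (r : ℂ))) (τ / 2))

/-- Eight-vertex weight `b̄(u)`. -/
def bw (τ : ℂ) (r : ℝ) (u : ℂ) : ℂ :=
  th2 (1 / (2 * (r : ℂ))) (τ / 2) * th1 (u / (2 * (r : ℂ))) (τ / 2) /
    (th2 0 (τ / 2) * th1 ((1 + u) / (2 * (r : ℂ))) (τ / 2))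

/-- Eight-vertex weight `c̄(u)`. -/
def cw (τ : ℂ) (r : ℝ) (u : ℂ) : ℂ :=
  th1 (1 / (2 * (r : ℂ))) (τ / 2) * th2 (u / (2 * (r : ℂ))) (τ / 2) /
    (th2 0 (τ / 2) * th1 ((1 + u) / (2 * (r : ℂ))) (τ / 2))

/-- Eight-vertex weight `d̄(u)`. -/
def dw (τ : ℂ) (r : ℝ) (u : ℂ) : ℂ :=
  -(th1 (1 / (2 * (r : ℂ))) (τ / 2) * th1 (u / (2 * (r : ℂ))) (τ / 2)) /
    (th2 0 (τ / 2) * th2 ((1 + u) / (2 * (r : ℂ))) (τ / 2))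

/-- The normalized eight-vertex `R`-matrix entry `R̄(u)_{(ε₁,ε₂),(ε₁',ε₂')}`. -/
def Rbar (τ : ℂ) (r : ℝ) (u : ℂ) (e1 e2 e1' e2' : ℤ) : ℂ :=
  if e1' = e1 ∧ e2' = e2 ∧ e1 = e2 then aw τ r u
  else if e1' = e1 ∧ e2' = e2 ∧ e1 = -e2 then bw τ r u
  else if e1' = e2 ∧ e2' = e1 ∧ e1 = -e2 then cw τ r u
  else if e1' = -e1 ∧ e2' = -e2 ∧ e1 = e2 then dw τ r u
  else 0

/-- Sklyanin standard-basis vector `v_+(z)`. -/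
def vp (τ z : ℂ) : ℂ := th3 (2 * z) (2 * τ) - th2 (2 * z) (2 * τ)

/-- Sklyanin standard-basis vector `v_-(z)`. -/
def vm (τ z : ℂ) : ℂ := th3 (2 * z) (2 * τ) + th2 (2 * z) (2 * τ)

/-!
A holomorphic function with period `1` and the quasi-period law of `jacobiTheta₂` is a multiple of
it. Applied to the triple product, this turns `th0, …, th3` into constant multiples of the theta
series `jTheta`, and, after the modular transformation `τ ↦ -1/τ`, the bracket `[u]` into a constant
multiple of `ϑ₁(u/r | τ)`.

The product formulas from modulus `τ/2` to modulus `τ` write `ψ*_{ε₁}(u)^a_b ψ*_{ε₂}(v)^b_c` as a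
sign combination of the four products `ϑᵢ(X + Y | τ) ϑᵢ(X - Y | τ)`, `X` and `Y` being the arguments
of the two factors. In these coordinates the `R`-matrix is diagonal with eigenvalues
`ϑᵢ((1 - w)/2r | τ) / ϑᵢ((1 + w)/2r | τ)`, up to exchanging the two signs, so the correspondence
splits into four scalar identities. Reflecting all heights, `h ↦ -h`, one may take `b = a - 1`.
If `c = a - 2`, the eigenvalue just interchanges `u` and `v`; if `c = a`, the scalar identity is the
three-term theta relation.
-/

open scoped Real

section FourierExpansion

variable {f : ℂ → ℂ} {τ : ℂ}

lemma intervalIntegral_comp_add_of_periodic (hf : Differentiable ℂ f)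
    (hper : Function.Periodic f 1) (w : ℂ) :
    ∫ x in (0 : ℝ)..1, f (x + w) = ∫ x in (0 : ℝ)..1, f x := by
  have vertical_sides (y : ℝ) : f (1 + y * I) = f (y * I) := by rw [add_comm, hper]
  have imaginary_shift : ∫ x in (0 : ℝ)..1, f (x + w.im * I) = ∫ x in (0 : ℝ)..1, f x := by
    have h := integral_boundary_rect_eq_zero_of_differentiableOn f 0 (1 + w.im * I)
      hf.differentiableOn
    simp only [zero_re, zero_im, add_re, add_im, one_re, one_im, mul_re, mul_im, ofReal_re,
      ofReal_im, I_re, I_im, ofReal_zero, ofReal_one, zero_mul, mul_zero, mul_one, add_zero,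
      sub_self, zero_add, vertical_sides, add_sub_cancel_right] at h
    exact (sub_eq_zero.1 h).symm
  have hper_line : Function.Periodic (fun x : ℝ => f (x + w.im * I)) 1 := fun x => by
    simpa only [ofReal_add, ofReal_one, add_right_comm] using hper (x + w.im * I)
  calc ∫ x in (0 : ℝ)..1, f (x + w)
      = ∫ x in (0 : ℝ)..1, f ((x + w.re : ℝ) + w.im * I) := by
        simp only [ofReal_add, add_assoc, re_add_im]
    _ = ∫ x in w.re..w.re + 1, f (x + w.im * I) := by
        rw [intervalIntegral.integral_comp_add_right (fun x : ℝ => f (x + w.im * I)),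
          zero_add, add_comm 1]
    _ = ∫ x in (0 : ℝ)..1, f (x + w.im * I) := by
        simpa only [zero_add] using hper_line.intervalIntegral_add_eq w.re 0
    _ = ∫ x in (0 : ℝ)..1, f x := imaginary_shift

/-- The `n`-th Fourier coefficient of a function of period `1`, as an integral over `[0, 1]`. -/
def unitFourierCoeff (φ : ℝ → ℂ) (n : ℤ) : ℂ :=
  ∫ x in (0 : ℝ)..1, cexp (-2 * π * I * n * x) * φ x

lemma hasSum_unitFourierCoeff {φ : ℝ → ℂ} (hφ : Continuous φ) (hper : Function.Periodic φ 1)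
    (hs : Summable (unitFourierCoeff φ)) : HasSum (unitFourierCoeff φ) (φ 0) := by
  let Φ : C(UnitAddCircle, ℂ) := ⟨hper.lift, continuous_coinduced_dom.mpr hφ⟩
  have coeff_eq : fourierCoeff Φ = unitFourierCoeff φ := by
    ext n
    rw [fourierCoeff_eq_intervalIntegral _ n 0, unitFourierCoeff]
    simp only [div_one, one_smul, zero_add]
    refine intervalIntegral.integral_congr fun x _ => ?_
    simp only [Φ, ContinuousMap.coe_mk, Function.Periodic.lift_coe, smul_eq_mul,
      fourier_coe_apply]
    congr 2
    push_cast
    ring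
  have value_at_zero : Φ ((0 : ℝ) : UnitAddCircle) = φ 0 := hper.lift_coe 0
  have h := has_pointwise_sum_fourier_series_of_summable (f := Φ) (coeff_eq ▸ hs)
    ((0 : ℝ) : UnitAddCircle)
  simpa only [coeff_eq, value_at_zero, fourier_coe_apply, ofReal_zero, mul_zero, zero_div,
    Complex.exp_zero, smul_eq_mul, mul_one] using h

lemma unitFourierCoeff_comp_add (hf : Differentiable ℂ f) (hper : Function.Periodic f 1)
    (w : ℂ) (n : ℤ) :
    unitFourierCoeff (fun x => f (x + w)) n =
      cexp (2 * π * I * n * w) * unitFourierCoeff (fun x => f x) n := by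
  have hper_twist : Function.Periodic (fun z => cexp (-2 * π * I * n * z) * f z) 1 := fun z => by
    have h : cexp (-2 * π * I * n * (z + 1)) = cexp (-2 * π * I * n * z) := by
      rw [Complex.exp_eq_exp_iff_exists_int]
      exact ⟨-n, by push_cast; ring⟩
    simp only [hper z, h]
  rw [unitFourierCoeff, unitFourierCoeff,
    ← intervalIntegral_comp_add_of_periodic (by fun_prop) hper_twist w,
    ← intervalIntegral.integral_const_mul]
  refine intervalIntegral.integral_congr fun x _ => ?_
  simp only [← mul_assoc, ← Complex.exp_add]
  ring_nf

lemma unitFourierCoeff_succ_of_quasiPeriodic (hf : Differentiable ℂ f)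
    (hper : Function.Periodic f 1)
    (hquasi : ∀ z, f (z + τ) = cexp (-π * I * (τ + 2 * z)) * f z) (n : ℤ) :
    unitFourierCoeff (fun x => f x) (n + 1) =
      cexp (π * I * τ * (2 * n + 1)) * unitFourierCoeff (fun x => f x) n := by
  have h := unitFourierCoeff_comp_add hf hper τ n
  have shifted : unitFourierCoeff (fun x => f (x + τ)) n =
      cexp (-π * I * τ) * unitFourierCoeff (fun x => f x) (n + 1) := by
    rw [unitFourierCoeff, unitFourierCoeff, ← intervalIntegral.integral_const_mul]
    refine intervalIntegral.integral_congr fun x _ => ?_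
    simp only [hquasi, ← mul_assoc, ← Complex.exp_add]
    congr 2
    push_cast
    ring
  rw [shifted] at h
  apply mul_left_cancel₀ (Complex.exp_ne_zero (-π * I * τ))
  rw [h, ← mul_assoc, ← Complex.exp_add]
  ring_nf

lemma unitFourierCoeff_of_quasiPeriodic (hf : Differentiable ℂ f) (hper : Function.Periodic f 1)
    (hquasi : ∀ z, f (z + τ) = cexp (-π * I * (τ + 2 * z)) * f z) (n : ℤ) :
    unitFourierCoeff (fun x => f x) n =
      (∫ x in (0 : ℝ)..1, f x) * cexp (π * I * n ^ 2 * τ) := by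
  have succ_eq := unitFourierCoeff_succ_of_quasiPeriodic hf hper hquasi
  induction n using Int.induction_on with
  | zero => simp [unitFourierCoeff]
  | succ k ih =>
    rw [succ_eq, ih, mul_left_comm, ← Complex.exp_add]
    push_cast
    ring_nf
  | pred k ih =>
    have h := succ_eq (-(k : ℤ) - 1)
    rw [sub_add_cancel, ih] at h
    apply mul_left_cancel₀ (Complex.exp_ne_zero (π * I * τ * (2 * (-(k : ℤ) - 1 : ℤ) + 1)))
    rw [← h, mul_left_comm, ← Complex.exp_add]
    push_cast
    ring_nf

theorem eq_integral_mul_jacobiTheta₂ (hτ : 0 < τ.im) (hf : Differentiable ℂ f)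
    (hper : Function.Periodic f 1)
    (hquasi : ∀ z, f (z + τ) = cexp (-π * I * (τ + 2 * z)) * f z) (z : ℂ) :
    f z = (∫ x in (0 : ℝ)..1, f x) * jacobiTheta₂ z τ := by
  have coeff_eq : unitFourierCoeff (fun x => f (x + z)) =
      fun n => (∫ x in (0 : ℝ)..1, f x) * jacobiTheta₂_term n z τ := by
    ext n
    rw [unitFourierCoeff_comp_add hf hper, unitFourierCoeff_of_quasiPeriodic hf hper hquasi,
      mul_left_comm, ← Complex.exp_add, jacobiTheta₂_term]
  have series := (hasSum_jacobiTheta₂_term z hτ).mul_left (∫ x in (0 : ℝ)..1, f x)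
  have h := hasSum_unitFourierCoeff (φ := fun x => f (x + z))
    (hf.continuous.comp (by fun_prop))
    (fun x => by simpa only [ofReal_add, ofReal_one, add_right_comm] using hper (x + z))
    (coeff_eq ▸ series.summable)
  rw [coeff_eq] at h
  simpa only [ofReal_zero, zero_add] using h.unique series

end FourierExpansion

section TripleProduct

/-- The `q`-Pochhammer symbol `(z; p)_∞`. -/
def qPochhammer (p z : ℂ) : ℂ := ∏' j : ℕ, (1 - z * p ^ j)

variable {p : ℂ}

lemma multipliable_one_sub_mul_pow (hp : ‖p‖ < 1) (z : ℂ) :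
    Multipliable fun j : ℕ => 1 - z * p ^ j := by
  simp_rw [sub_eq_add_neg]
  apply multipliable_one_add_of_summable
  simpa using (summable_geometric_of_lt_one (norm_nonneg _) hp).mul_left _

lemma qPochhammer_eq_one_sub_mul (hp : ‖p‖ < 1) (z : ℂ) :
    qPochhammer p z = (1 - z) * qPochhammer p (p * z) := by
  have shift : (fun j : ℕ => 1 - z * p ^ (j + 1)) = fun j => 1 - p * z * p ^ j := by
    ext j
    ring
  have tail : Multipliable fun j : ℕ => 1 - z * p ^ (j + 1) :=
    shift ▸ multipliable_one_sub_mul_pow hp (p * z)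
  rw [qPochhammer, tprod_eq_zero_mul' (f := fun j => 1 - z * p ^ j) tail, shift, qPochhammer,
    pow_zero, mul_one]

lemma differentiable_qPochhammer (hp : ‖p‖ < 1) : Differentiable ℂ (qPochhammer p) := by
  have prod_converges : HasProdLocallyUniformlyOn (fun (n : ℕ) (z : ℂ) => 1 - z * p ^ n)
      (qPochhammer p) Set.univ := by
    unfold qPochhammer
    simp_rw [sub_eq_add_neg]
    apply hasProdLocallyUniformlyOn_of_forall_compact isOpen_univ
    intro K _ hK
    obtain ⟨M, hM⟩ := hK.isBounded.exists_norm_le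
    refine ((summable_geometric_of_lt_one (norm_nonneg _) hp).mul_left
      M).hasProdUniformlyOn_nat_one_add hK (.of_forall fun n z hz => ?_) (fun _ => by fun_prop)
    simp only [norm_neg, norm_mul, norm_pow]
    gcongr
    exact hM z hz
  rw [← differentiableOn_univ]
  exact prod_converges.differentiableOn
    (.of_forall fun _ => by
      simpa [Finset.prod_fn] using DifferentiableOn.finsetProd (fun _ _ => by fun_prop))
    isOpen_univ

lemma Theta_eq_qPochhammer (hp : ‖p‖ < 1) (z : ℂ) :
    Theta p z = qPochhammer p z * qPochhammer p (p / z) * qPochhammer p p := by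
  have h1 := multipliable_one_sub_mul_pow hp z
  have h2 := multipliable_one_sub_mul_pow hp (p / z)
  have h3 := multipliable_one_sub_mul_pow hp p
  rw [qPochhammer, qPochhammer, qPochhammer, ← h1.tprod_mul h2, ← (h1.mul h2).tprod_mul h3, Theta]
  exact tprod_congr fun j => by ring

lemma Theta_mul_left (hp : ‖p‖ < 1) (hp0 : p ≠ 0) {z : ℂ} (hz : z ≠ 0) :
    Theta p (p * z) = -z⁻¹ * Theta p z := by
  have cancel : p / (p * z) = z⁻¹ := by field_simp
  rw [Theta_eq_qPochhammer hp, Theta_eq_qPochhammer hp, qPochhammer_eq_one_sub_mul hp z, cancel,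
    qPochhammer_eq_one_sub_mul hp z⁻¹, div_eq_mul_inv]
  field_simp
  ring

lemma differentiable_Theta_comp (hp : ‖p‖ < 1) {w : ℂ → ℂ} (hw : Differentiable ℂ w)
    (hw0 : ∀ z, w z ≠ 0) : Differentiable ℂ fun z => Theta p (w z) := by
  have h := differentiable_qPochhammer hp
  simp_rw [Theta_eq_qPochhammer hp]
  exact ((h.comp hw).mul (h.comp ((differentiable_const p).div hw hw0))).mul_const _

variable {σ : ℂ}

lemma norm_cexp_two_pi_I_mul_lt_one (hσ : 0 < σ.im) : ‖cexp (2 * π * I * σ)‖ < 1 :=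
  UpperHalfPlane.norm_exp_two_pi_I_lt_one ⟨σ, hσ⟩

/-- The factor between the product and the series in Jacobi's triple product identity. Its value
is `1`, but all that matters is that it does not depend on the argument. -/
def tripleProductConst (σ : ℂ) : ℂ :=
  ∫ x in (0 : ℝ)..1, Theta (cexp (2 * π * I * σ)) (-cexp (π * I * (σ + 2 * x)))

theorem Theta_eq_tripleProductConst_mul_jacobiTheta₂ (hσ : 0 < σ.im) (z : ℂ) :
    Theta (cexp (2 * π * I * σ)) (-cexp (π * I * (σ + 2 * z))) =
      tripleProductConst σ * jacobiTheta₂ z σ := by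
  have hq := norm_cexp_two_pi_I_mul_lt_one hσ
  have hne (z : ℂ) : -cexp (π * I * (σ + 2 * z)) ≠ 0 := neg_ne_zero.2 (Complex.exp_ne_zero _)
  refine eq_integral_mul_jacobiTheta₂
    (f := fun z => Theta (cexp (2 * π * I * σ)) (-cexp (π * I * (σ + 2 * z)))) hσ
    (differentiable_Theta_comp hq (by fun_prop) hne) (fun z => ?_) (fun z => ?_) z
  · have h : cexp (π * I * (σ + 2 * (z + 1))) = cexp (π * I * (σ + 2 * z)) :=
      Complex.exp_eq_exp_iff_exists_int.2 ⟨1, by push_cast; ring⟩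
    simp only [h]
  · have h : -cexp (π * I * (σ + 2 * (z + σ))) =
        cexp (2 * π * I * σ) * -cexp (π * I * (σ + 2 * z)) := by
      rw [mul_neg, ← Complex.exp_add]
      ring_nf
    simp only [h]
    rw [Theta_mul_left hq (Complex.exp_ne_zero _) (hne z), inv_neg, neg_neg, ← Complex.exp_neg]
    ring_nf

lemma th1_eq_Theta (hσ : 0 < σ.im) (v : ℂ) :
    th1 v σ = I * cexp (π * I * (σ / 4 - v)) *
      Theta (cexp (2 * π * I * σ)) (cexp (2 * π * I * v)) := by
  have hq := norm_cexp_two_pi_I_mul_lt_one hσ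
  set q := cexp (2 * π * I * σ)
  set w := cexp (2 * π * I * v) with hw_def
  have hw0 : w ≠ 0 := Complex.exp_ne_zero _
  have euler_prod : ∏' n : ℕ, (1 - q ^ (n + 1)) = qPochhammer q q :=
    tprod_congr fun j => by ring
  have two_cos_eq : 2 * cos (2 * π * v) = w + w⁻¹ := by
    rw [Complex.two_cos, hw_def, ← Complex.exp_neg]
    ring_nf
  have cos_prod : ∏' n : ℕ, (1 - 2 * q ^ (n + 1) * cos (2 * π * v) + q ^ (2 * (n + 1))) =
      qPochhammer q (q * w) * qPochhammer q (q / w) := by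
    rw [qPochhammer, qPochhammer, ← (multipliable_one_sub_mul_pow hq (q * w)).tprod_mul
      (multipliable_one_sub_mul_pow hq (q / w))]
    refine tprod_congr fun j => ?_
    rw [mul_right_comm, two_cos_eq]
    field_simp
    ring
  have two_sin_eq : 2 * sin (π * v) = I * cexp (-(π * I * v)) * (1 - w) := by
    rw [Complex.two_sin, hw_def, mul_sub, mul_assoc I _ (cexp (2 * π * I * v)),
      ← Complex.exp_add]
    ring_nf
  have exp_split : cexp (π * I * (σ / 4 - v)) =
      cexp (2 * π * I * σ / 8) * cexp (-(π * I * v)) := by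
    rw [← Complex.exp_add]
    ring_nf
  rw [th1, Theta_eq_qPochhammer hq, qPochhammer_eq_one_sub_mul hq w, euler_prod, cos_prod,
    exp_split]
  linear_combination (cexp (2 * π * I * σ / 8) * qPochhammer q q *
    (qPochhammer q (q * w) * qPochhammer q (q / w))) * two_sin_eq

end TripleProduct

section ThetaFunctions

/-- The Jacobi theta functions `ϑ₀, ϑ₁, ϑ₂, ϑ₃` of modulus `σ` as Fourier series, in the indexing
used for `th0`, `th1`, `th2` and `th3`. -/
def jTheta (σ : ℂ) : Fin 4 → ℂ → ℂ
  | 0, x => jacobiTheta₂ (x + 1 / 2) σ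
  | 1, x => -I * cexp (π * I * (x + σ / 4)) * jacobiTheta₂ (x + 1 / 2 + σ / 2) σ
  | 2, x => cexp (π * I * (x + σ / 4)) * jacobiTheta₂ (x + σ / 2) σ
  | 3, x => jacobiTheta₂ x σ

variable (σ x y : ℂ)

lemma cexp_pi_mul_I_mul_add_half (z : ℂ) : cexp (π * I * (z + 1 / 2)) = I * cexp (π * I * z) := by
  rw [mul_add, Complex.exp_add, mul_one_div, mul_div_right_comm, Complex.exp_pi_div_two_mul_I,
    mul_comm]

lemma jTheta_three_add_half : jTheta σ 3 (x + 1 / 2) = jTheta σ 0 x := rfl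

lemma jTheta_zero_add_half : jTheta σ 0 (x + 1 / 2) = jTheta σ 3 x := by
  rw [jTheta, jTheta, add_assoc, add_halves, jacobiTheta₂_add_left]

lemma jTheta_two_add_half : jTheta σ 2 (x + 1 / 2) = -jTheta σ 1 x := by
  rw [jTheta, jTheta, add_right_comm x, cexp_pi_mul_I_mul_add_half]
  ring

lemma jTheta_one_add_half : jTheta σ 1 (x + 1 / 2) = jTheta σ 2 x := by
  rw [jTheta, jTheta, add_right_comm x, cexp_pi_mul_I_mul_add_half, add_assoc x, add_halves,
    add_right_comm x, jacobiTheta₂_add_left]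
  linear_combination
    -cexp (π * I * (x + σ / 4)) * jacobiTheta₂ (x + σ / 2) σ * Complex.I_mul_I

lemma jTheta_one_add_half_modulus :
    jTheta σ 1 (x + σ / 2) = I * cexp (-(π * I * (x + σ / 4))) * jTheta σ 0 x := by
  have exp_eq : cexp (-(π * I * (x + σ / 4))) =
      -(cexp (π * I * (x + σ / 2 + σ / 4)) * cexp (-π * I * (σ + 2 * (x + 1 / 2)))) := by
    rw [← Complex.exp_add, ← Complex.exp_add_pi_mul_I]
    ring_nf
  rw [jTheta, jTheta, exp_eq, show x + σ / 2 + 1 / 2 + σ / 2 = x + 1 / 2 + σ by ring,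
    jacobiTheta₂_add_left']
  ring

lemma jTheta_three_neg : jTheta σ 3 (-x) = jTheta σ 3 x := jacobiTheta₂_neg_left x σ

lemma jTheta_zero_neg : jTheta σ 0 (-x) = jTheta σ 0 x := by
  rw [← jTheta_three_add_half, ← jTheta_three_neg, ← jTheta_zero_add_half]
  ring_nf

lemma jTheta_two_neg : jTheta σ 2 (-x) = jTheta σ 2 x := by
  rw [jTheta, jTheta, show x + σ / 2 = -(-x + σ / 2) + σ by ring, jacobiTheta₂_add_left',
    jacobiTheta₂_neg_left, ← mul_assoc, ← Complex.exp_add]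
  ring_nf

lemma jTheta_one_neg : jTheta σ 1 (-x) = -jTheta σ 1 x := by
  rw [← jTheta_two_add_half, ← jTheta_two_neg, ← jTheta_one_add_half]
  ring_nf

lemma jTheta_neg_mul_neg (i : Fin 4) :
    jTheta σ i (-x) * jTheta σ i (-y) = jTheta σ i x * jTheta σ i y := by
  fin_cases i
  · exact congrArg₂ _ (jTheta_zero_neg σ x) (jTheta_zero_neg σ y)
  · exact (congrArg₂ _ (jTheta_one_neg σ x) (jTheta_one_neg σ y)).trans (neg_mul_neg _ _)
  · exact congrArg₂ _ (jTheta_two_neg σ x) (jTheta_two_neg σ y)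
  · exact congrArg₂ _ (jTheta_three_neg σ x) (jTheta_three_neg σ y)

variable {σ}

lemma th1_eq_jTheta (hσ : 0 < σ.im) : th1 x σ = tripleProductConst σ * jTheta σ 1 x := by
  have arg_eq : cexp (2 * π * I * x) = -cexp (π * I * (σ + 2 * (-(-x + 1 / 2 + σ / 2)))) := by
    rw [← Complex.exp_add_pi_mul_I]
    ring_nf
  rw [th1_eq_Theta hσ, arg_eq, Theta_eq_tripleProductConst_mul_jacobiTheta₂ hσ,
    jacobiTheta₂_neg_left, ← neg_neg (jTheta σ 1 x), ← jTheta_one_neg, jTheta]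
  ring_nf

lemma th0_eq_jTheta (hσ : 0 < σ.im) : th0 x σ = tripleProductConst σ * jTheta σ 0 x := by
  rw [th0, th1_eq_jTheta _ hσ, jTheta_one_add_half_modulus, Complex.exp_neg]
  field_simp
  linear_combination (-tripleProductConst σ * jTheta σ 0 x) * Complex.I_sq

lemma th2_eq_jTheta (hσ : 0 < σ.im) : th2 x σ = tripleProductConst σ * jTheta σ 2 x := by
  rw [th2, th1_eq_jTheta _ hσ, jTheta_one_add_half]

lemma th3_eq_jTheta (hσ : 0 < σ.im) : th3 x σ = tripleProductConst σ * jTheta σ 3 x := by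
  rw [th3, th1_eq_jTheta _ hσ, show x + (σ + 1) / 2 = x + 1 / 2 + σ / 2 by ring,
    jTheta_one_add_half_modulus, jTheta_zero_add_half, Complex.exp_neg, add_right_comm x,
    cexp_pi_mul_I_mul_add_half]
  field_simp

/-- The factor between the bracket `[u]` and the theta function `ϑ₁(u/r | τ)`, produced by the
modular transformation `τ ↦ -1/τ`. -/
def bracketConst (τ : ℂ) : ℂ :=
  tripleProductConst (-1 / τ) * (-I * τ) ^ (1 / 2 : ℂ) * cexp (π * I / (4 * τ))

variable {τ : ℂ} {r : ℝ}

lemma jacobiTheta₂_neg_inv_eq_jTheta_one (hτ : τ ≠ 0) (z : ℂ) :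
    jacobiTheta₂ ((-z + 1 / 2 - τ / 2) / τ) (-1 / τ) =
      (-I * τ) ^ (1 / 2 : ℂ) * cexp (π * I * (z ^ 2 - z + 1 / 4) / τ) * jTheta τ 1 z := by
  have reflect : jacobiTheta₂ (-z + 1 / 2 - τ / 2) τ = jacobiTheta₂ (z + 1 / 2 + τ / 2) τ := by
    rw [← jacobiTheta₂_neg_left, ← jacobiTheta₂_add_left]
    ring_nf
  have exp_eq : cexp (π * I * (z ^ 2 - z + 1 / 4) / τ) * -I * cexp (π * I * (z + τ / 4)) =
      (cexp (-π * I * (-z + 1 / 2 - τ / 2) ^ 2 / τ))⁻¹ := by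
    rw [← Complex.exp_neg, ← Complex.exp_neg_pi_div_two_mul_I, ← Complex.exp_add,
      ← Complex.exp_add]
    congr 1
    field_simp
    ring
  have h := jacobiTheta₂_functional_equation (-z + 1 / 2 - τ / 2) τ
  rw [reflect] at h
  rw [jTheta, ← mul_assoc, ← mul_assoc, mul_assoc _ _ (-I), mul_assoc _ (_ * -I), exp_eq, h]
  field_simp

lemma br_eq_jTheta (hτ : 0 < τ.im) (hr : 0 < r) (u : ℂ) :
    br τ r u = bracketConst τ * jTheta τ 1 (u / r) := by
  have hτ0 : τ ≠ 0 := fun h => by simp [h] at hτ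
  have hr0 : (r : ℂ) ≠ 0 := ofReal_ne_zero.2 hr.ne'
  have hdual : 0 < (-1 / τ).im := by simpa using UpperHalfPlane.im_pnat_div_pos 1 ⟨τ, hτ⟩
  have nome_eq : xp τ r (2 * r) = cexp (2 * π * I * (-1 / τ)) := by
    rw [xp]
    congr 1
    field_simp
  have arg_eq : xp τ r (2 * u) =
      -cexp (π * I * (-1 / τ + 2 * ((-(u / r) + 1 / 2 - τ / 2) / τ))) := by
    rw [xp, ← Complex.exp_add_pi_mul_I]
    congr 1
    field_simp
    ring
  have exp_eq : xp τ r (u ^ 2 / r - u) * cexp (π * I * ((u / r) ^ 2 - u / r + 1 / 4) / τ) =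
      cexp (π * I / (4 * τ)) := by
    rw [xp, ← Complex.exp_add]
    congr 1
    field_simp
    ring
  rw [br, nome_eq, arg_eq, Theta_eq_tripleProductConst_mul_jacobiTheta₂ hdual,
    jacobiTheta₂_neg_inv_eq_jTheta_one hτ0, bracketConst, ← exp_eq]
  ring

lemma br_neg (hτ : 0 < τ.im) (hr : 0 < r) (u : ℂ) : br τ r (-u) = -br τ r u := by
  rw [br_eq_jTheta hτ hr, br_eq_jTheta hτ hr, neg_div, jTheta_one_neg, mul_neg]

end ThetaFunctions

section ProductFormulas

-- The two sums on the right run over the pairs `(m, n)` with `m + n` even and odd.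
lemma tsum_int_prod_eq_add_tsum {f : ℤ × ℤ → ℂ} (hf : Summable f) :
    ∑' p, f p = (∑' p : ℤ × ℤ, f (p.1 + p.2, p.1 - p.2)) +
      ∑' p : ℤ × ℤ, f (p.1 + p.2 + 1, p.1 - p.2) := by
  let rotation : (ℤ × ℤ) ⊕ (ℤ × ℤ) → ℤ × ℤ :=
    Sum.elim (fun p => (p.1 + p.2, p.1 - p.2)) (fun p => (p.1 + p.2 + 1, p.1 - p.2))
  have rotation_bijective : Function.Bijective rotation := by
    constructor
    · rintro (⟨a, b⟩ | ⟨a, b⟩) (⟨c, d⟩ | ⟨c, d⟩) h <;>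
        simp only [rotation, Sum.elim_inl, Sum.elim_inr, Prod.mk.injEq, Sum.inl.injEq,
          Sum.inr.injEq, reduceCtorEq] at h ⊢ <;> omega
    · rintro ⟨m, n⟩
      rcases Int.even_or_odd' (m + n) with ⟨k, even | odd⟩
      · exact ⟨.inl (k, m - k), by simp only [rotation, Sum.elim_inl, Prod.mk.injEq]; omega⟩
      · exact ⟨.inr (k, m - k - 1), by simp only [rotation, Sum.elim_inr, Prod.mk.injEq]; omega⟩
  let e := Equiv.ofBijective rotation rotation_bijective
  have hs : Summable (f ∘ e) := e.summable_iff.2 hf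
  rw [← e.tsum_eq f]
  exact ((hs.comp_injective Sum.inl_injective).hasSum.sum
    (hs.comp_injective Sum.inr_injective).hasSum).tsum_eq

variable {σ : ℂ} (x y : ℂ)

lemma jacobiTheta₂_mul_jacobiTheta₂ (hσ : 0 < σ.im) :
    jacobiTheta₂ x σ * jacobiTheta₂ y σ =
      jacobiTheta₂ (x + y) (2 * σ) * jacobiTheta₂ (x - y) (2 * σ) +
      cexp (π * I * (σ + 2 * x)) *
        (jacobiTheta₂ (x + y + σ) (2 * σ) * jacobiTheta₂ (x - y + σ) (2 * σ)) := by
  have hσ2 : 0 < (2 * σ).im := by simpa using hσ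
  have norm_summable (z : ℂ) {ρ : ℂ} (hρ : 0 < ρ.im) :
      Summable fun n => ‖jacobiTheta₂_term n z ρ‖ :=
    ((summable_jacobiTheta₂_term_iff z ρ).2 hρ).norm
  have mul_eq_tsum (z w : ℂ) {ρ : ℂ} (hρ : 0 < ρ.im) : jacobiTheta₂ z ρ * jacobiTheta₂ w ρ =
      ∑' p : ℤ × ℤ, jacobiTheta₂_term p.1 z ρ * jacobiTheta₂_term p.2 w ρ :=
    tsum_mul_tsum_of_summable_norm (norm_summable z hρ) (norm_summable w hρ)
  rw [mul_eq_tsum _ _ hσ, mul_eq_tsum _ _ hσ2, mul_eq_tsum _ _ hσ2, tsum_int_prod_eq_add_tsum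
    (summable_mul_of_summable_norm (norm_summable x hσ) (norm_summable y hσ)), ← tsum_mul_left]
  congr 1 <;>
  · refine tsum_congr fun p => ?_
    simp only [jacobiTheta₂_term, ← Complex.exp_add]
    push_cast
    ring_nf

lemma jTheta_three_mul_three (hσ : 0 < σ.im) :
    jTheta σ 3 x * jTheta σ 3 y =
      jTheta (2 * σ) 3 (x + y) * jTheta (2 * σ) 3 (x - y) +
        jTheta (2 * σ) 2 (x + y) * jTheta (2 * σ) 2 (x - y) := by
  have exp_eq : cexp (π * I * (σ + 2 * x)) =
      cexp (π * I * (x + y + 2 * σ / 4)) * cexp (π * I * (x - y + 2 * σ / 4)) := by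
    rw [← Complex.exp_add]
    ring_nf
  simp only [jTheta, jacobiTheta₂_mul_jacobiTheta₂ x y hσ, exp_eq,
    mul_div_cancel_left₀ σ (two_ne_zero' ℂ)]
  ring

lemma jTheta_two_mul_two (hσ : 0 < σ.im) :
    jTheta σ 2 x * jTheta σ 2 y =
      jTheta (2 * σ) 2 (x + y) * jTheta (2 * σ) 3 (x - y) +
        jTheta (2 * σ) 3 (x + y) * jTheta (2 * σ) 2 (x - y) := by
  have exp_add_eq : cexp (π * I * (x + y + 2 * σ / 4)) =
      cexp (π * I * (x + σ / 4)) * cexp (π * I * (y + σ / 4)) := by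
    rw [← Complex.exp_add]
    ring_nf
  have exp_sub_eq : cexp (π * I * (x - y + 2 * σ / 4)) =
      cexp (π * I * (x + σ / 4)) * cexp (π * I * (y + σ / 4)) *
        cexp (π * I * (σ + 2 * (x + σ / 2))) * cexp (-π * I * (2 * σ + 2 * (x + y))) := by
    simp only [← Complex.exp_add]
    ring_nf
  have h := jacobiTheta₂_mul_jacobiTheta₂ (x + σ / 2) (y + σ / 2) hσ
  rw [add_add_add_comm, add_halves, add_sub_add_right_eq_sub, add_assoc (x + y), ← two_mul,
    jacobiTheta₂_add_left'] at h
  simp only [jTheta, mul_div_cancel_left₀ σ (two_ne_zero' ℂ), exp_add_eq, exp_sub_eq]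
  linear_combination cexp (π * I * (x + σ / 4)) * cexp (π * I * (y + σ / 4)) * h

lemma jTheta_zero_mul_three (hσ : 0 < σ.im) :
    jTheta σ 0 x * jTheta σ 3 y =
      jTheta (2 * σ) 0 (x + y) * jTheta (2 * σ) 0 (x - y) +
        jTheta (2 * σ) 1 (x + y) * jTheta (2 * σ) 1 (x - y) := by
  rw [← jTheta_three_add_half, jTheta_three_mul_three _ _ hσ, add_right_comm,
    add_sub_right_comm]
  simp only [jTheta_three_add_half, jTheta_two_add_half, neg_mul_neg]

lemma jTheta_three_mul_zero (hσ : 0 < σ.im) :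
    jTheta σ 3 x * jTheta σ 0 y =
      jTheta (2 * σ) 0 (x + y) * jTheta (2 * σ) 0 (x - y) -
        jTheta (2 * σ) 1 (x + y) * jTheta (2 * σ) 1 (x - y) := by
  rw [mul_comm, jTheta_zero_mul_three _ _ hσ, ← neg_sub x y, jTheta_zero_neg, jTheta_one_neg,
    add_comm y x]
  ring

lemma jTheta_zero_mul_zero (hσ : 0 < σ.im) :
    jTheta σ 0 x * jTheta σ 0 y =
      jTheta (2 * σ) 3 (x + y) * jTheta (2 * σ) 3 (x - y) -
        jTheta (2 * σ) 2 (x + y) * jTheta (2 * σ) 2 (x - y) := by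
  rw [← jTheta_three_add_half σ y, jTheta_zero_mul_three _ _ hσ, ← add_assoc, ← sub_sub,
    ← jTheta_three_add_half _ (x - y - 1 / 2), ← neg_neg (jTheta _ 1 (x - y - 1 / 2)),
    ← jTheta_two_add_half, sub_add_cancel, jTheta_zero_add_half, jTheta_one_add_half]
  ring

lemma jTheta_one_mul_two (hσ : 0 < σ.im) :
    jTheta σ 1 x * jTheta σ 2 y =
      jTheta (2 * σ) 1 (x + y) * jTheta (2 * σ) 0 (x - y) +
        jTheta (2 * σ) 0 (x + y) * jTheta (2 * σ) 1 (x - y) := by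
  rw [← neg_neg (jTheta σ 1 x), ← jTheta_two_add_half, neg_mul, jTheta_two_mul_two _ _ hσ,
    add_right_comm, add_sub_right_comm]
  simp only [jTheta_three_add_half, jTheta_two_add_half]
  ring

lemma jTheta_two_mul_one (hσ : 0 < σ.im) :
    jTheta σ 2 x * jTheta σ 1 y =
      jTheta (2 * σ) 1 (x + y) * jTheta (2 * σ) 0 (x - y) -
        jTheta (2 * σ) 0 (x + y) * jTheta (2 * σ) 1 (x - y) := by
  rw [mul_comm, jTheta_one_mul_two _ _ hσ, ← neg_sub x y, jTheta_zero_neg, jTheta_one_neg,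
    add_comm y x]
  ring

lemma jTheta_one_mul_one (hσ : 0 < σ.im) :
    jTheta σ 1 x * jTheta σ 1 y =
      jTheta (2 * σ) 3 (x + y) * jTheta (2 * σ) 2 (x - y) -
        jTheta (2 * σ) 2 (x + y) * jTheta (2 * σ) 3 (x - y) := by
  rw [← neg_neg (jTheta σ 1 y), ← jTheta_two_add_half, mul_neg, jTheta_one_mul_two _ _ hσ,
    ← add_assoc, ← sub_sub, ← jTheta_three_add_half _ (x - y - 1 / 2),
    ← neg_neg (jTheta _ 1 (x - y - 1 / 2)), ← jTheta_two_add_half, sub_add_cancel,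
    jTheta_zero_add_half, jTheta_one_add_half]
  ring

lemma exists_jTheta_add_mul_jTheta_sub (hσ : 0 < σ.im) (i : Fin 4) (w : ℂ) :
    ∃ α β : ℂ, ∀ z, jTheta σ i (z + w) * jTheta σ i (z - w) =
      α * jTheta (2 * σ) 3 (2 * z) + β * jTheta (2 * σ) 2 (2 * z) := by
  have arg_add (z : ℂ) : z + w + (z - w) = 2 * z := by ring
  have arg_sub (z : ℂ) : z + w - (z - w) = 2 * w := by ring
  fin_cases i
  · refine ⟨jTheta (2 * σ) 3 (2 * w), -jTheta (2 * σ) 2 (2 * w),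
      fun z => (jTheta_zero_mul_zero _ _ hσ).trans ?_⟩
    rw [arg_add, arg_sub]
    ring
  · refine ⟨jTheta (2 * σ) 2 (2 * w), -jTheta (2 * σ) 3 (2 * w),
      fun z => (jTheta_one_mul_one _ _ hσ).trans ?_⟩
    rw [arg_add, arg_sub]
    ring
  · refine ⟨jTheta (2 * σ) 2 (2 * w), jTheta (2 * σ) 3 (2 * w),
      fun z => (jTheta_two_mul_two _ _ hσ).trans ?_⟩
    rw [arg_add, arg_sub]
    ring
  · refine ⟨jTheta (2 * σ) 3 (2 * w), jTheta (2 * σ) 2 (2 * w),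
      fun z => (jTheta_three_mul_three _ _ hσ).trans ?_⟩
    rw [arg_add, arg_sub]
    ring

theorem jTheta_three_term (hσ : 0 < σ.im) (i : Fin 4) (x y z w : ℂ) :
    jTheta σ 1 (x + y) * jTheta σ 1 (x - y) * (jTheta σ i (z + w) * jTheta σ i (z - w)) +
      jTheta σ 1 (y + z) * jTheta σ 1 (y - z) * (jTheta σ i (x + w) * jTheta σ i (x - w)) +
      jTheta σ 1 (z + x) * jTheta σ 1 (z - x) * (jTheta σ i (y + w) * jTheta σ i (y - w)) = 0 := by
  obtain ⟨α, β, linear⟩ := exists_jTheta_add_mul_jTheta_sub hσ i w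
  have wedge (x y : ℂ) : jTheta σ 1 (x + y) * jTheta σ 1 (x - y) =
      jTheta (2 * σ) 3 (2 * x) * jTheta (2 * σ) 2 (2 * y) -
        jTheta (2 * σ) 2 (2 * x) * jTheta (2 * σ) 3 (2 * y) := by
    rw [jTheta_one_mul_one _ _ hσ]
    ring_nf
  -- Now each `ϑ₁` product is a `2 × 2` determinant, and the claim is a Plücker relation.
  simp only [linear, wedge]
  ring

end ProductFormulas

section VertexWeights

variable {σ τ w : ℂ} {r : ℝ} (x : ℂ)

lemma th2_zero_mul_th2 (hσ : 0 < σ.im) :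
    th2 0 σ * th2 x σ =
      2 * tripleProductConst σ ^ 2 * (jTheta (2 * σ) 2 x * jTheta (2 * σ) 3 x) := by
  rw [th2_eq_jTheta _ hσ, th2_eq_jTheta _ hσ, mul_mul_mul_comm, jTheta_two_mul_two _ _ hσ,
    zero_add, zero_sub, jTheta_two_neg, jTheta_three_neg]
  ring

lemma th2_zero_mul_th1 (hσ : 0 < σ.im) :
    th2 0 σ * th1 x σ =
      2 * tripleProductConst σ ^ 2 * (jTheta (2 * σ) 0 x * jTheta (2 * σ) 1 x) := by
  rw [th2_eq_jTheta _ hσ, th1_eq_jTheta _ hσ, mul_mul_mul_comm, jTheta_two_mul_one _ _ hσ,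
    zero_add, zero_sub, jTheta_zero_neg, jTheta_one_neg]
  ring

variable {x}

lemma jTheta_ne_zero_of_half_modulus (hτ : 0 < (τ / 2).im) (h0 : th2 0 (τ / 2) ≠ 0)
    (h1 : th1 x (τ / 2) ≠ 0) (h2 : th2 x (τ / 2) ≠ 0) (i : Fin 4) : jTheta τ i x ≠ 0 := by
  have ne22 := right_ne_zero_of_mul (th2_zero_mul_th2 x hτ ▸ mul_ne_zero h0 h2)
  have ne21 := right_ne_zero_of_mul (th2_zero_mul_th1 x hτ ▸ mul_ne_zero h0 h1)
  rw [mul_div_cancel₀ τ (two_ne_zero' ℂ)] at ne22 ne21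
  fin_cases i
  exacts [left_ne_zero_of_mul ne21, right_ne_zero_of_mul ne21, left_ne_zero_of_mul ne22,
    right_ne_zero_of_mul ne22]

/-- The factor by which the `R`-matrix `R̄(w)` multiplies the `i`-th argument of `sectorForm`. -/
def vertexRatio (τ : ℂ) (r : ℝ) (w : ℂ) (i : Fin 4) : ℂ :=
  jTheta τ i ((1 - w) / (2 * r)) / jTheta τ i ((1 + w) / (2 * r))

lemma aw_eq_vertexRatio (hτ : 0 < (τ / 2).im) (hκ : tripleProductConst (τ / 2) ≠ 0)
    (hne : ∀ i, jTheta τ i ((1 + w) / (2 * r)) ≠ 0) :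
    aw τ r w = (vertexRatio τ r w 3 + vertexRatio τ r w 2) / 2 := by
  have h2 := hne 2
  have h3 := hne 3
  rw [aw, th2_zero_mul_th2 _ hτ, th2_eq_jTheta _ hτ, th2_eq_jTheta _ hτ, mul_mul_mul_comm,
    jTheta_two_mul_two _ _ hτ, ← add_div, ← sub_div, mul_div_cancel₀ τ (two_ne_zero' ℂ),
    vertexRatio, vertexRatio]
  field_simp

lemma dw_eq_vertexRatio (hτ : 0 < (τ / 2).im) (hκ : tripleProductConst (τ / 2) ≠ 0)
    (hne : ∀ i, jTheta τ i ((1 + w) / (2 * r)) ≠ 0) :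
    dw τ r w = (vertexRatio τ r w 3 - vertexRatio τ r w 2) / 2 := by
  have h2 := hne 2
  have h3 := hne 3
  rw [dw, th2_zero_mul_th2 _ hτ, th1_eq_jTheta _ hτ, th1_eq_jTheta _ hτ, mul_mul_mul_comm,
    jTheta_one_mul_one _ _ hτ, ← add_div, ← sub_div, mul_div_cancel₀ τ (two_ne_zero' ℂ),
    vertexRatio, vertexRatio]
  field_simp
  ring

lemma bw_eq_vertexRatio (hτ : 0 < (τ / 2).im) (hκ : tripleProductConst (τ / 2) ≠ 0)
    (hne : ∀ i, jTheta τ i ((1 + w) / (2 * r)) ≠ 0) :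
    bw τ r w = (vertexRatio τ r w 0 - vertexRatio τ r w 1) / 2 := by
  have h0 := hne 0
  have h1 := hne 1
  rw [bw, th2_zero_mul_th1 _ hτ, th2_eq_jTheta _ hτ, th1_eq_jTheta _ hτ, mul_mul_mul_comm,
    jTheta_two_mul_one _ _ hτ, ← add_div, ← sub_div, mul_div_cancel₀ τ (two_ne_zero' ℂ),
    vertexRatio, vertexRatio]
  field_simp

lemma cw_eq_vertexRatio (hτ : 0 < (τ / 2).im) (hκ : tripleProductConst (τ / 2) ≠ 0)
    (hne : ∀ i, jTheta τ i ((1 + w) / (2 * r)) ≠ 0) :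
    cw τ r w = (vertexRatio τ r w 0 + vertexRatio τ r w 1) / 2 := by
  have h0 := hne 0
  have h1 := hne 1
  rw [cw, th2_zero_mul_th1 _ hτ, th1_eq_jTheta _ hτ, th2_eq_jTheta _ hτ, mul_mul_mul_comm,
    jTheta_one_mul_two _ _ hτ, ← add_div, ← sub_div, mul_div_cancel₀ τ (two_ne_zero' ℂ),
    vertexRatio, vertexRatio]
  field_simp

/-- The linear form that expresses a product of two dual vectors of signs `e1` and `e2` through
the four products `ϑᵢ(X + Y | τ) ϑᵢ(X - Y | τ)`. -/
def sectorForm (e1 e2 : ℤ) : (Fin 4 → ℂ) →ₗ[ℂ] ℂ :=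
  if e1 = e2 then .proj 3 + (e1 : ℂ) • .proj 2 else (e1 : ℂ) • .proj 1 - .proj 0

theorem sum_Rbar_mul_sectorForm (hτ : 0 < (τ / 2).im) (hκ : tripleProductConst (τ / 2) ≠ 0)
    (hne : ∀ i, jTheta τ i ((1 + w) / (2 * r)) ≠ 0) {e1 e2 : ℤ} (he1 : e1 = 1 ∨ e1 = -1)
    (he2 : e2 = 1 ∨ e2 = -1) (P : Fin 4 → ℂ) :
    ∑ e1' ∈ ({1, -1} : Finset ℤ), ∑ e2' ∈ ({1, -1} : Finset ℤ),
        Rbar τ r w e1' e2' e1 e2 * sectorForm e1' e2' P =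
      sectorForm e2 e1 (vertexRatio τ r w * P) := by
  simp only [Rbar, aw_eq_vertexRatio hτ hκ hne, bw_eq_vertexRatio hτ hκ hne,
    cw_eq_vertexRatio hτ hκ hne, dw_eq_vertexRatio hτ hκ hne]
  rcases he1 with rfl | rfl <;> rcases he2 with rfl | rfl <;> simp [sectorForm] <;> ring

end VertexWeights

section DualVectors

variable {σ τ : ℂ} {r : ℝ}

/-- The theta function in the component of sign `ε` of the dual vectors, up to the factors that do
not depend on `ε`. -/
def dualTheta (σ : ℂ) (ε : ℤ) (x : ℂ) : ℂ :=
  if ε = 1 then jTheta σ 3 x else -jTheta σ 0 x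

lemma dualTheta_mul_dualTheta (hσ : 0 < σ.im) {e1 e2 : ℤ} (he1 : e1 = 1 ∨ e1 = -1)
    (he2 : e2 = 1 ∨ e2 = -1) (x y : ℂ) :
    dualTheta σ e1 x * dualTheta σ e2 y =
      sectorForm e1 e2 fun i => jTheta (2 * σ) i (x + y) * jTheta (2 * σ) i (x - y) := by
  rcases he1 with rfl | rfl <;> rcases he2 with rfl | rfl <;>
    simp [dualTheta, sectorForm, jTheta_three_mul_three x y hσ, jTheta_three_mul_zero x y hσ,
      jTheta_zero_mul_three x y hσ, jTheta_zero_mul_zero x y hσ] <;> ring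

/-- The argument of the theta function in the dual vector `ψ*(u)^a_b`. -/
def dualArg (r : ℝ) (u : ℂ) (a b : ℤ) : ℂ := ((a - b) * (u - 1) + a) / (2 * r)

lemma psiStar_eq_dualTheta (hτ : 0 < (τ / 2).im) (u : ℂ) {ε : ℤ} (hε : ε = 1 ∨ ε = -1)
    (a b : ℤ) :
    psiStar τ r u ε a b = -(a - b) * (Cc τ r ^ 2 * tripleProductConst (τ / 2) / 2) *
      dualTheta (τ / 2) ε (dualArg r u a b) / (br τ r b * br τ r u) := by
  rcases hε with rfl | rfl <;>
    simp [psiStar, psi, dualTheta, dualArg, th0_eq_jTheta _ hτ, th3_eq_jTheta _ hτ] <;> ring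

/-- The four coordinates, in the sense of `sectorForm`, of the product `ψ*(u)^a_b ψ*(v)^b_c`, with
all factors that do not depend on the intermediate height `b` removed. -/
def pathWeight (τ : ℂ) (r : ℝ) (u v : ℂ) (a b c : ℤ) (i : Fin 4) : ℂ :=
  (a - b) * (b - c) / br τ r b *
    (jTheta τ i (dualArg r u a b + dualArg r v b c) *
      jTheta τ i (dualArg r u a b - dualArg r v b c))

/-- The factor of `ψ*(u)^a_b ψ*(v)^b_c` not seen by `pathWeight`. -/
def pathFactor (τ : ℂ) (r : ℝ) (u v : ℂ) (c : ℤ) : ℂ :=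
  (Cc τ r ^ 2 * tripleProductConst (τ / 2) / 2) ^ 2 / (br τ r c * br τ r u * br τ r v)

lemma pathFactor_comm (u v : ℂ) (c : ℤ) : pathFactor τ r u v c = pathFactor τ r v u c := by
  rw [pathFactor, pathFactor, mul_right_comm]

lemma psiStar_mul_psiStar (hτ : 0 < (τ / 2).im) (u v : ℂ) {e1 e2 : ℤ} (he1 : e1 = 1 ∨ e1 = -1)
    (he2 : e2 = 1 ∨ e2 = -1) (a b c : ℤ) :
    psiStar τ r u e1 a b * psiStar τ r v e2 b c =
      pathFactor τ r u v c * sectorForm e1 e2 (pathWeight τ r u v a b c) := by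
  have hpath : pathWeight τ r u v a b c = ((a - b) * (b - c) / br τ r b : ℂ) • fun i =>
      jTheta (2 * (τ / 2)) i (dualArg r u a b + dualArg r v b c) *
        jTheta (2 * (τ / 2)) i (dualArg r u a b - dualArg r v b c) := by
    rw [mul_div_cancel₀ τ (two_ne_zero' ℂ)]
    rfl
  rw [psiStar_eq_dualTheta hτ u he1, psiStar_eq_dualTheta hτ v he2, hpath, map_smul,
    ← dualTheta_mul_dualTheta hτ he1 he2, pathFactor, smul_eq_mul]
  ring

end DualVectors

section ExchangeRelation

variable {τ : ℂ} {r : ℝ}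

lemma Wb_neg (hτ : 0 < τ.im) (hr : 0 < r) (w : ℂ) (a b d c : ℤ) :
    Wb τ r w (-a) (-b) (-d) (-c) = Wb τ r w a b d c := by
  have reflect (x y : ℂ) : br τ r (-x) * y / (br τ r (-a) * br τ r (1 + w)) =
      br τ r x * y / (br τ r a * br τ r (1 + w)) := by
    rw [br_neg hτ hr, br_neg hτ hr, neg_mul, neg_mul, neg_div_neg_eq]
  have minus_sub : (-a - w : ℂ) = -(a + w) := by ring
  have minus_add : (-a + w : ℂ) = -(a - w) := by ring
  have minus_add_one : (-a + 1 : ℂ) = -(a - 1) := by ring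
  have minus_sub_one : (-a - 1 : ℂ) = -(a + 1) := by ring
  simp only [Wb, Int.cast_neg, minus_sub, minus_add, minus_add_one, minus_sub_one, reflect]
  split_ifs <;> first | omega | rfl

lemma Wb_straight (w : ℂ) (a : ℤ) : Wb τ r w (a - 2) (a - 1) (a - 1) a = 1 := by
  rw [Wb, if_pos (by omega)]

lemma Wb_down_down (w : ℂ) (a : ℤ) :
    Wb τ r w a (a - 1) (a - 1) a = br τ r (a + w) * br τ r 1 / (br τ r a * br τ r (1 + w)) := by
  rw [Wb, if_neg (by omega), if_neg (by omega), if_neg (by omega), if_pos (by omega)]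

lemma Wb_up_down (w : ℂ) (a : ℤ) :
    Wb τ r w a (a + 1) (a - 1) a = br τ r (a + 1) * br τ r w / (br τ r a * br τ r (1 + w)) := by
  rw [Wb, if_neg (by omega), if_neg (by omega), if_neg (by omega), if_neg (by omega),
    if_pos (by omega)]

lemma pathWeight_neg (hτ : 0 < τ.im) (hr : 0 < r) (u v : ℂ) (a b c : ℤ) (i : Fin 4) :
    pathWeight τ r u v (-a) (-b) (-c) i = -pathWeight τ r u v a b c i := by
  have dualArg_neg (u : ℂ) (a b : ℤ) : dualArg r u (-a) (-b) = -dualArg r u a b := by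
    simp only [dualArg, Int.cast_neg]
    ring
  rw [pathWeight, pathWeight, dualArg_neg, dualArg_neg, ← neg_add, ← neg_sub', jTheta_neg_mul_neg,
    Int.cast_neg, Int.cast_neg, Int.cast_neg, br_neg hτ hr]
  ring

lemma br_mul_br_mul_jTheta (hτ : 0 < τ.im) (hr : 0 < r) (i : Fin 4) (a w m : ℂ) :
    br τ r a * br τ r (1 + w) *
        (jTheta τ i ((1 - w) / (2 * r)) * jTheta τ i ((2 * a - 1 + w) / (2 * r)) * jTheta τ i m) =
      jTheta τ i ((1 + w) / (2 * r)) *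
        (br τ r (a + w) * br τ r 1 * (jTheta τ i ((2 * a - 1 - w) / (2 * r)) * jTheta τ i m) +
          br τ r (a - 1) * br τ r w *
            (jTheta τ i ((2 * a + 1 + w) / (2 * r)) * jTheta τ i (-m))) := by
  have three_term :
      jTheta τ 1 (a / r) * jTheta τ 1 ((1 + w) / r) *
          (jTheta τ i ((2 * a - 1 + w) / (2 * r)) * jTheta τ i (-((1 - w) / (2 * r)))) +
        jTheta τ 1 ((a - 1) / r) * jTheta τ 1 (-(w / r)) *
          (jTheta τ i ((2 * a + 1 + w) / (2 * r)) * jTheta τ i ((1 + w) / (2 * r))) +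
        jTheta τ 1 ((a + w) / r) * jTheta τ 1 (-(1 / r)) *
          (jTheta τ i ((2 * a - 1 - w) / (2 * r)) * jTheta τ i (-((1 + w) / (2 * r)))) = 0 := by
    convert jTheta_three_term hτ i ((a + 1 + w) / (2 * r)) ((a - 1 - w) / (2 * r))
      ((a - 1 + w) / (2 * r)) (a / (2 * r)) using 5 <;> ring_nf
  have flip (x : ℂ) : jTheta τ i (-x) * jTheta τ i (-m) = jTheta τ i x * jTheta τ i m :=
    jTheta_neg_mul_neg τ x m i
  simp only [jTheta_one_neg] at three_term
  simp only [br_eq_jTheta hτ hr]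
  linear_combination bracketConst τ ^ 2 * jTheta τ i (-m) * three_term -
    bracketConst τ ^ 2 * jTheta τ 1 (a / r) * jTheta τ 1 ((1 + w) / r) *
      jTheta τ i ((2 * a - 1 + w) / (2 * r)) * flip ((1 - w) / (2 * r)) +
    bracketConst τ ^ 2 * jTheta τ 1 ((a + w) / r) * jTheta τ 1 (1 / r) *
      jTheta τ i ((2 * a - 1 - w) / (2 * r)) * flip ((1 + w) / (2 * r))

variable {u v : ℂ}

lemma vertexRatio_mul_pathWeight_straight {i : Fin 4}
    (hne : jTheta τ i ((1 + (u - v)) / (2 * r)) ≠ 0) (a : ℤ) :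
    vertexRatio τ r (u - v) i * pathWeight τ r u v a (a - 1) (a - 2) i =
      pathWeight τ r v u a (a - 1) (a - 2) i := by
  have arg_add : dualArg r v a (a - 1) + dualArg r u (a - 1) (a - 2) =
      dualArg r u a (a - 1) + dualArg r v (a - 1) (a - 2) := by
    simp only [dualArg, Int.cast_sub]
    ring
  have arg_sub (u v : ℂ) : dualArg r u a (a - 1) - dualArg r v (a - 1) (a - 2) =
      (1 + (u - v)) / (2 * r) := by
    simp only [dualArg, Int.cast_sub, Int.cast_one, Int.cast_ofNat]
    ring
  have swap : 1 - (u - v) = 1 + (v - u) := by ring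
  rw [vertexRatio, pathWeight, pathWeight, arg_add, arg_sub u v, arg_sub v u, swap]
  field_simp

lemma vertexRatio_mul_pathWeight_turn (hτ : 0 < τ.im) (hr : 0 < r) {i : Fin 4}
    (hne : jTheta τ i ((1 + (u - v)) / (2 * r)) ≠ 0) {a : ℤ} (ha : br τ r a ≠ 0)
    (ha_sub : br τ r (a - 1) ≠ 0) (ha_add : br τ r (a + 1) ≠ 0)
    (huv : br τ r (1 + (u - v)) ≠ 0) :
    vertexRatio τ r (u - v) i * pathWeight τ r u v a (a - 1) a i =
      Wb τ r (u - v) a (a - 1) (a - 1) a * pathWeight τ r v u a (a - 1) a i +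
        Wb τ r (u - v) a (a + 1) (a - 1) a * pathWeight τ r v u a (a + 1) a i := by
  have weight_down (u v : ℂ) : pathWeight τ r u v a (a - 1) a i =
      -(jTheta τ i ((2 * a - 1 + (u - v)) / (2 * r)) * jTheta τ i ((u + v - 1) / (2 * r))) /
        br τ r (a - 1) := by
    simp only [pathWeight, dualArg, Int.cast_sub, Int.cast_one]
    ring_nf
  have weight_up : pathWeight τ r v u a (a + 1) a i =
      -(jTheta τ i ((2 * a + 1 + (u - v)) / (2 * r)) * jTheta τ i (-((u + v - 1) / (2 * r)))) /
        br τ r (a + 1) := by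
    simp only [pathWeight, dualArg, Int.cast_add, Int.cast_one]
    ring_nf
  have swap : 2 * (a : ℂ) - 1 + (v - u) = 2 * a - 1 - (u - v) := by ring
  rw [vertexRatio, weight_down u v, weight_down v u, weight_up, Wb_down_down, Wb_up_down, swap,
    add_comm v u]
  field_simp
  linear_combination -br_mul_br_mul_jTheta hτ hr i a (u - v) ((u + v - 1) / (2 * r))

lemma filter_pred_succ_of_straight (a : ℤ) :
    ({a - 1, a + 1} : Finset ℤ).filter (fun b' => |b' - (a - 2)| = 1) = {a - 1} := by
  ext b'
  simp only [mem_filter, mem_insert, mem_singleton]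
  grind

lemma filter_pred_succ_of_turn (a : ℤ) :
    ({a - 1, a + 1} : Finset ℤ).filter (fun b' => |b' - a| = 1) = {a - 1, a + 1} := by
  ext b'
  simp only [mem_filter, mem_insert, mem_singleton]
  grind

lemma vertexRatio_mul_pathWeight_of_pred (hτ : 0 < τ.im) (hr : 0 < r) {i : Fin 4}
    (hne : jTheta τ i ((1 + (u - v)) / (2 * r)) ≠ 0) {a c : ℤ} (hac : |a - 1 - c| = 1)
    (hc : br τ r c ≠ 0) (ha_sub : br τ r (a - 1) ≠ 0) (ha_add : br τ r (a + 1) ≠ 0)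
    (huv : br τ r (1 + (u - v)) ≠ 0) :
    vertexRatio τ r (u - v) i * pathWeight τ r u v a (a - 1) c i =
      ∑ b' ∈ ({a - 1, a + 1} : Finset ℤ).filter (fun b' => |b' - c| = 1),
        Wb τ r (u - v) c b' (a - 1) a * pathWeight τ r v u a b' c i := by
  obtain rfl | rfl : c = a - 2 ∨ c = a := by grind
  · rw [filter_pred_succ_of_straight, sum_singleton, Wb_straight, one_mul,
      vertexRatio_mul_pathWeight_straight hne]
  · rw [filter_pred_succ_of_turn, sum_pair (by omega),
      vertexRatio_mul_pathWeight_turn hτ hr hne hc ha_sub ha_add huv]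

theorem vertexRatio_mul_pathWeight (hτ : 0 < τ.im) (hr : 0 < r) {i : Fin 4}
    (hne : jTheta τ i ((1 + (u - v)) / (2 * r)) ≠ 0) {a b c : ℤ} (hab : |a - b| = 1)
    (hbc : |b - c| = 1) (hc : br τ r c ≠ 0) (ha_sub : br τ r (a - 1) ≠ 0)
    (ha_add : br τ r (a + 1) ≠ 0) (huv : br τ r (1 + (u - v)) ≠ 0) :
    vertexRatio τ r (u - v) i * pathWeight τ r u v a b c i =
      ∑ b' ∈ ({a - 1, a + 1} : Finset ℤ).filter (fun b' => |b' - c| = 1),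
        Wb τ r (u - v) c b' b a * pathWeight τ r v u a b' c i := by
  obtain rfl | rfl : b = a - 1 ∨ b = -(-a - 1) := by grind
  · exact vertexRatio_mul_pathWeight_of_pred hτ hr hne hbc hc ha_sub ha_add huv
  · have reflected := vertexRatio_mul_pathWeight_of_pred hτ hr hne (a := -a) (c := -c)
      (by grind) (by simpa [br_neg hτ hr] using hc)
      (by rwa [Int.cast_neg, ← neg_add', br_neg hτ hr, neg_ne_zero])
      (by rwa [Int.cast_neg, neg_add_eq_sub, ← neg_sub, br_neg hτ hr, neg_ne_zero]) huv
    have negate : ∑ b' ∈ ({-a - 1, -a + 1} : Finset ℤ).filter (fun b' => |b' - -c| = 1),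
          Wb τ r (u - v) (-c) b' (-a - 1) (-a) * pathWeight τ r v u (-a) b' (-c) i =
        ∑ b' ∈ ({a - 1, a + 1} : Finset ℤ).filter (fun b' => |b' - c| = 1),
          Wb τ r (u - v) (-c) (-b') (-a - 1) (-a) * pathWeight τ r v u (-a) (-b') (-c) i :=
      sum_nbij' (-·) (-·) (by grind) (by grind) (by grind) (by grind) (by grind)
    rw [negate, ← neg_neg (-a - 1)] at reflected
    simpa only [pathWeight_neg hτ hr, Wb_neg hτ hr, mul_neg, sum_neg_distrib, neg_inj]
      using reflected

end ExchangeRelation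

/-- Dual vertex-face correspondence. -/
theorem dual_vertex_face_correspondence (τ : ℂ) (r : ℝ) (hτ : 0 < τ.im) (hr : 0 < r)
    (u v : ℂ) (e1 e2 : ℤ) (he1 : e1 = 1 ∨ e1 = -1) (he2 : e2 = 1 ∨ e2 = -1)
    (a b c : ℤ) (hab : |a - b| = 1) (hbc : |b - c| = 1)
    (h1 : th2 0 (τ / 2) ≠ 0)
    (h2 : th1 ((1 + (u - v)) / (2 * (r : ℂ))) (τ / 2) ≠ 0)
    (h3 : th2 ((1 + (u - v)) / (2 * (r : ℂ))) (τ / 2) ≠ 0)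
    (h4 : br τ r u ≠ 0) (h5 : br τ r v ≠ 0)
    (h6 : br τ r (b : ℂ) ≠ 0) (h7 : br τ r (c : ℂ) ≠ 0)
    (h8 : br τ r ((a : ℂ) - 1) ≠ 0) (h9 : br τ r ((a : ℂ) + 1) ≠ 0)
    (h10 : br τ r (1 + (u - v)) ≠ 0) :
    ∑ e1' ∈ ({1, -1} : Finset ℤ), ∑ e2' ∈ ({1, -1} : Finset ℤ),
        Rbar τ r (u - v) e1' e2' e1 e2 * psiStar τ r u e1' a b * psiStar τ r v e2' b c =
      ∑ b' ∈ ({a - 1, a + 1} : Finset ℤ).filter fun b' => |b' - c| = 1,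
        psiStar τ r v e2 a b' * psiStar τ r u e1 b' c * Wb τ r (u - v) c b' b a := by
  have hτ2 : 0 < (τ / 2).im := by simpa using hτ
  have hκ : tripleProductConst (τ / 2) ≠ 0 := left_ne_zero_of_mul (th2_eq_jTheta 0 hτ2 ▸ h1)
  have hne := jTheta_ne_zero_of_half_modulus hτ2 h1 h2 h3
  have exchange : vertexRatio τ r (u - v) * pathWeight τ r u v a b c =
      ∑ b' ∈ ({a - 1, a + 1} : Finset ℤ).filter fun b' => |b' - c| = 1,
        Wb τ r (u - v) c b' b a • pathWeight τ r v u a b' c := by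
    ext i
    simpa using vertexRatio_mul_pathWeight hτ hr (hne i) hab hbc h7 h8 h9 h10
  calc _ = pathFactor τ r u v c *
        ∑ e1' ∈ ({1, -1} : Finset ℤ), ∑ e2' ∈ ({1, -1} : Finset ℤ),
          Rbar τ r (u - v) e1' e2' e1 e2 *
            sectorForm e1' e2' (pathWeight τ r u v a b c) := by
        simp only [mul_sum]
        refine sum_congr rfl fun e1' he1' => sum_congr rfl fun e2' he2' => ?_
        rw [mul_assoc, psiStar_mul_psiStar hτ2 u v (by simpa using he1') (by simpa using he2')]
        ring
    _ = pathFactor τ r v u c *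
        sectorForm e2 e1 (vertexRatio τ r (u - v) * pathWeight τ r u v a b c) := by
        rw [sum_Rbar_mul_sectorForm hτ2 hκ hne he1 he2, pathFactor_comm]
    _ = _ := by
        rw [exchange, map_sum, mul_sum]
        refine sum_congr rfl fun b' _ => ?_
        rw [psiStar_mul_psiStar hτ2 v u he2 he1, map_smul, smul_eq_mul]
        ring

end Ell
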